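/- arXiv:math-ph/0203027 — 4 statements merged into one kernel-verified Lean document; each statement's English description precedes it below -/
import Mathlib

section
/- Let A be a commutative ℝ-algebra and L₀ ⊆ Der(A) both a Lie subalgebra and an A-submodule. For every A-linear map α : Der(A) → A vanishing on L₀ and all X, Y ∈ L₀, the connection ∇ is flat: ∇_X(∇_Y α) − ∇_Y(∇_X α) = ∇_{⁅X,Y⁆} α as functions on Der(A); i.e., the curvature R(X,Y) = [∇_X, ∇_Y] − ∇_{⁅X,Y⁆} of the connection for the pair (L₀, Ω¹(L,A,L₀)) vanishes. -/
/-- The covariant derivative `(∇_X β)(Y) = X(β Y) − Y(β X) − β ⁅X,Y⁆`. -/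
def nabla {A : Type*} [CommRing A] [Algebra ℝ A]
    (X : Derivation ℝ A A) (β : Derivation ℝ A A → A) : Derivation ℝ A A → A :=
  fun Y => X (β Y) - Y (β X) - β ⁅X, Y⁆

/-!
Regard `A` as a module over the Lie algebra `Der(A)`. For a 1-form `α` the formula defining
`(∇_X α)(Y)` is that of the Chevalley–Eilenberg differential `dα(X, Y)`, and substituting it into
`d(dα)(X, Y, W) = 0` yields the curvature of `∇` on all 1-forms:
`(∇_X ∇_Y α - ∇_Y ∇_X α - ∇_⁅X, Y⁆ α)(W) = W (dα(X, Y))`.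
If `α` vanishes on a Lie subalgebra containing `X` and `Y`, then so do all three terms of
`dα(X, Y)`.
-/

open LieModule.Cohomology

section Cochain

variable {R L M : Type*} [CommRing R] [LieRing L] [LieAlgebra R L] [AddCommGroup M] [Module R M]
  [LieRingModule L M] [LieModule R L M]

theorem d₁₂_mem_twoCocycle (a : oneCochain R L M) : d₁₂ R L M a ∈ twoCocycle R L M :=
  (mem_twoCocycle_iff R L M _).2 <| LinearMap.congr_fun (d₂₃_comp_d₁₂ R L M) a

theorem d₁₂_apply_sub_d₁₂_apply_of_mem_twoCocycle {c : twoCochain R L M}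
    (hc : c ∈ twoCocycle R L M) (x y w : L) :
    d₁₂ R L M (c y) x w - d₁₂ R L M (c x) y w = c ⁅x, y⁆ w + ⁅w, c x y⁆ := by
  have cocycle : ⁅x, c y w⁆ - ⁅y, c x w⁆ + ⁅w, c x y⁆ - c ⁅x, y⁆ w + c ⁅x, w⁆ y - c ⁅y, w⁆ x = 0 :=
    LinearMap.congr_fun (LinearMap.congr_fun₂ ((mem_twoCocycle_iff R L M c).1 hc) x y) w
  rw [← twoCochain_skew c y ⁅x, w⁆, ← twoCochain_skew c x ⁅y, w⁆] at cocycle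
  rw [d₁₂_apply_apply, d₁₂_apply_apply, ← twoCochain_skew c x y, lie_neg, ← sub_eq_zero, ← cocycle]
  abel

end Cochain

section Connection

variable {A : Type*} [CommRing A] [Algebra ℝ A]

theorem nabla_eq_d₁₂ (X : Derivation ℝ A A) (α : Derivation ℝ A A →ₗ[ℝ] A) :
    nabla X α = d₁₂ ℝ (Derivation ℝ A A) A α X :=
  rfl

theorem nabla_nabla_sub_nabla_nabla (α : Derivation ℝ A A →ₗ[ℝ] A) (X Y W : Derivation ℝ A A) :
    nabla X (nabla Y α) W - nabla Y (nabla X α) W = nabla ⁅X, Y⁆ α W + W (nabla X α Y) := by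
  simp only [nabla_eq_d₁₂]
  exact d₁₂_apply_sub_d₁₂_apply_of_mem_twoCocycle (d₁₂_mem_twoCocycle α) X Y W

theorem nabla_apply_eq_zero {β : Derivation ℝ A A → A} {X Y : Derivation ℝ A A}
    (hX : β X = 0) (hY : β Y = 0) (hXY : β ⁅X, Y⁆ = 0) : nabla X β Y = 0 := by
  simp only [nabla, hX, hY, hXY, map_zero, sub_zero]

theorem stmt6_general (α : Derivation ℝ A A →ₗ[ℝ] A) {X Y : Derivation ℝ A A}
    (hα : nabla X α Y = 0) (W : Derivation ℝ A A) :
    nabla X (nabla Y α) W - nabla Y (nabla X α) W = nabla ⁅X, Y⁆ α W := by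
  rw [nabla_nabla_sub_nabla_nabla, hα, map_zero, add_zero]

end Connection

/-- the connection for the pair `(L₀, Ω¹(L,A,L₀))` is flat:
for `X, Y ∈ L₀` and any `A`-linear `α` vanishing on `L₀`,
`∇_X(∇_Y α) − ∇_Y(∇_X α) = ∇_{⁅X,Y⁆} α`. -/
theorem stmt6 {A : Type*} [CommRing A] [Algebra ℝ A]
    (L₀ : Submodule A (Derivation ℝ A A))
    (hLie : ∀ X ∈ L₀, ∀ Y ∈ L₀, ⁅X, Y⁆ ∈ L₀)
    (α : Derivation ℝ A A →ₗ[A] A) (hα : ∀ Z ∈ L₀, α Z = 0)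
    (X Y : Derivation ℝ A A) (hX : X ∈ L₀) (hY : Y ∈ L₀) :
    ∀ W : Derivation ℝ A A,
      nabla X (nabla Y (fun Z => α Z)) W - nabla Y (nabla X (fun Z => α Z)) W
        = nabla ⁅X, Y⁆ (fun Z => α Z) W :=
  stmt6_general (α.restrictScalars ℝ) <|
    nabla_apply_eq_zero (hα X hX) (hα Y hY) (hα _ (hLie X hX Y hY))
end

section
/- Let A be a commutative ℝ-algebra, L₀ ⊆ Der(A) both a Lie subalgebra and an A-submodule, and I ⊆ A an ideal invariant under L₀ (X(I) ⊆ I for every X ∈ L₀). Then for every a ∈ I, u ∈ L₀, and every A-linear α : Der(A) → A vanishing on L₀, one has ∇_{a•u}(α) = a•(∇_u α); in particular ∇_{a•u}(α) lies in I·Ω¹(L,A,L₀), so the induced action of the Lie subalgebra I·L₀ on the quotient module Ω¹(L,A,L₀)/I·Ω¹(L,A,L₀) is trivial. -/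
/-- The `A`-submodule `I·Ω¹(L,A,L₀)` of functions `Der(A) → A`, generated by the
products `b • β` with `b ∈ I` and `β` an `A`-linear 1-form vanishing on `L₀`. -/
def IOmega {A : Type*} [CommRing A] [Algebra ℝ A]
    (I : Ideal A) (L₀ : Submodule A (Derivation ℝ A A)) :
    Submodule A (Derivation ℝ A A → A) :=
  Submodule.span A
    {g | ∃ b ∈ I, ∃ β : Derivation ℝ A A →ₗ[A] A,
      (∀ Z ∈ L₀, β Z = 0) ∧ g = fun Y => b * β Y}

/-!
The point is that `(X, Y) ↦ (∇_X α)(Y)` is the differential `dα`, an `A`-bilinear form. It is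
skew-symmetric, and it is linear in `Y` because the term `X(a) α(Y)` of `X(α(a • Y))` cancels
against the one coming from `⁅X, a • Y⁆ = a • ⁅X, Y⁆ + X(a) • Y`. If `α` vanishes on a submodule
closed under the bracket, all three terms of `dα` vanish there; hence `∇_X α` vanishes on the
submodule whenever `X` belongs to it.
-/

section LieRinehart

variable {A L : Type*} [CommRing A] [LieRing L] [LieRingModule L A]

/-- The covariant derivative `∇_x β` of a map `β : L → A` on a Lie ring `L` acting on `A`. It
extends `nabla` beyond derivations, writing `⁅x, a⁆` for the action of `x` on `a`. -/
def covDeriv (x : L) (β : L → A) : L → A :=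
  fun y ↦ ⁅x, β y⁆ - ⁅y, β x⁆ - β ⁅x, y⁆

variable [Module A L]

lemma covDeriv_apply_swap (α : Module.Dual A L) (x y : L) :
    covDeriv x α y = -covDeriv y α x := by
  simp only [covDeriv, ← lie_skew x y, map_neg]
  abel

lemma covDeriv_apply_add (α : Module.Dual A L) (x y z : L) :
    covDeriv x α (y + z) = covDeriv x α y + covDeriv x α z := by
  simp only [covDeriv, add_lie, lie_add, map_add]
  abel

lemma covDeriv_apply_eq_zero_of_mem {N : Submodule A L} (hN : ∀ x ∈ N, ∀ y ∈ N, ⁅x, y⁆ ∈ N)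
    {α : Module.Dual A L} (hα : ∀ z ∈ N, α z = 0) {x y : L} (hx : x ∈ N) (hy : y ∈ N) :
    covDeriv x α y = 0 := by
  simp only [covDeriv, hα x hx, hα y hy, hα _ (hN x hx y hy), lie_zero, sub_zero]

variable [LieRinehartRing A L]

lemma covDeriv_apply_smul (α : Module.Dual A L) (x : L) (a : A) (y : L) :
    covDeriv x α (a • y) = a * covDeriv x α y := by
  have hα : α ⁅x, a • y⁆ = a * α ⁅x, y⁆ + ⁅x, a⁆ * α y := by
    rw [LieRinehartRing.leibniz_smul_right, map_add, map_smul, map_smul, smul_eq_mul, smul_eq_mul]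
  simp only [covDeriv, hα, map_smul, smul_eq_mul, LieRinehartRing.leibniz_mul_right,
    LieRinehartRing.lie_smul_eq_mul]
  ring

/-- The differential `dα` of a 1-form `α` on a Lie–Rinehart ring, curried so that
`oneFormDifferential α x` is the contraction of `dα` with `x`, that is, `∇_x α` as a 1-form. -/
def oneFormDifferential (α : Module.Dual A L) : L →ₗ[A] Module.Dual A L :=
  LinearMap.mk₂ A (fun x y ↦ covDeriv x α y)
    (fun x y z ↦ by
      rw [covDeriv_apply_swap, covDeriv_apply_add, neg_add, ← covDeriv_apply_swap,
        ← covDeriv_apply_swap])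
    (fun a x y ↦ by
      rw [covDeriv_apply_swap, covDeriv_apply_smul, ← mul_neg, ← covDeriv_apply_swap, smul_eq_mul])
    (covDeriv_apply_add α)
    (fun a x y ↦ covDeriv_apply_smul α x a y)

lemma coe_oneFormDifferential (α : Module.Dual A L) (x : L) :
    ⇑(oneFormDifferential α x) = covDeriv x α :=
  rfl

lemma covDeriv_smul (α : Module.Dual A L) (a : A) (x : L) :
    covDeriv (a • x) α = a • covDeriv x α := by
  simp only [← coe_oneFormDifferential, map_smul, LinearMap.coe_smul]

lemma map_oneFormDifferential_le_dualAnnihilator {N : Submodule A L}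
    (hN : ∀ x ∈ N, ∀ y ∈ N, ⁅x, y⁆ ∈ N) {α : Module.Dual A L} (hα : ∀ z ∈ N, α z = 0) :
    N.map (oneFormDifferential α) ≤ N.dualAnnihilator := by
  rintro _ ⟨x, hx, rfl⟩
  exact (Submodule.mem_dualAnnihilator _).2 fun y hy ↦ covDeriv_apply_eq_zero_of_mem hN hα hx hy

lemma oneFormDifferential_mem_smul_dualAnnihilator {N : Submodule A L}
    (hN : ∀ x ∈ N, ∀ y ∈ N, ⁅x, y⁆ ∈ N) {α : Module.Dual A L} (hα : ∀ z ∈ N, α z = 0)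
    {I : Ideal A} {x : L} (hx : x ∈ I • N) :
    oneFormDifferential α x ∈ I • N.dualAnnihilator := by
  have hmap : oneFormDifferential α x ∈ I • N.map (oneFormDifferential α) := by
    rw [← Submodule.map_smul'']
    exact Submodule.mem_map_of_mem hx
  exact smul_mono_right I (map_oneFormDifferential_le_dualAnnihilator hN hα) hmap

theorem stmt8_general (N : Submodule A L) (hN : ∀ x ∈ N, ∀ y ∈ N, ⁅x, y⁆ ∈ N) (I : Ideal A)
    (α : Module.Dual A L) (hα : ∀ z ∈ N, α z = 0) :
    (∀ (a : A) (x : L), covDeriv (a • x) α = a • covDeriv x α) ∧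
    ∀ x ∈ I • N, covDeriv x α ∈ (I • N.dualAnnihilator).map (LinearMap.ltoFun A L A A) :=
  ⟨covDeriv_smul α, fun x hx ↦
    ⟨oneFormDifferential α x, oneFormDifferential_mem_smul_dualAnnihilator hN hα hx, rfl⟩⟩

end LieRinehart

section Derivation

variable {A : Type*} [CommRing A] [Algebra ℝ A]

lemma nabla_eq_covDeriv (X : Derivation ℝ A A) (β : Derivation ℝ A A → A) :
    nabla X β = covDeriv X β :=
  rfl

lemma IOmega_eq_map_ltoFun (I : Ideal A) (L₀ : Submodule A (Derivation ℝ A A)) :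
    IOmega I L₀ =
      (I • L₀.dualAnnihilator).map (LinearMap.ltoFun A (Derivation ℝ A A) A A) := by
  apply le_antisymm
  · refine Submodule.span_le.2 ?_
    rintro _ ⟨b, hb, β, hβ, rfl⟩
    exact ⟨b • β, Submodule.smul_mem_smul hb ((Submodule.mem_dualAnnihilator β).2 hβ), rfl⟩
  · rw [Submodule.map_le_iff_le_comap, Submodule.smul_le]
    exact fun b hb β hβ ↦
      Submodule.subset_span ⟨b, hb, β, (Submodule.mem_dualAnnihilator β).1 hβ, rfl⟩

end Derivation

/-- if the ideal `I` is invariant under `L₀`, then for `a ∈ I`, `u ∈ L₀`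
and an `A`-linear `α` vanishing on `L₀`: `∇_{a•u}(α) = a•(∇_u α)`; in particular
`∇_{a•u}(α) ∈ I·Ω¹(L,A,L₀)`, so the induced action of `I·L₀` on the quotient
`Ω¹(L,A,L₀)/I·Ω¹(L,A,L₀)` is trivial. -/
theorem stmt8 {A : Type*} [CommRing A] [Algebra ℝ A]
    (L₀ : Submodule A (Derivation ℝ A A))
    (hLie : ∀ X ∈ L₀, ∀ Y ∈ L₀, ⁅X, Y⁆ ∈ L₀)
    (I : Ideal A) (hI : ∀ X ∈ L₀, ∀ a ∈ I, X a ∈ I)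
    (a : A) (ha : a ∈ I) (u : Derivation ℝ A A) (hu : u ∈ L₀)
    (α : Derivation ℝ A A →ₗ[A] A) (hα : ∀ Z ∈ L₀, α Z = 0) :
    (∀ Y : Derivation ℝ A A,
        nabla (a • u) (fun W => α W) Y = a * nabla u (fun W => α W) Y) ∧
    nabla (a • u) (fun W => α W) ∈ IOmega I L₀ := by
  obtain ⟨hsmul, hmem⟩ := stmt8_general L₀ hLie I α hα
  rw [nabla_eq_covDeriv, nabla_eq_covDeriv, IOmega_eq_map_ltoFun]
  exact ⟨congrFun (hsmul a u), hmem (a • u) (Submodule.smul_mem_smul ha hu)⟩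
end

section
/- Let A be a commutative ℝ-algebra, D ⊆ Der(A) a Lie subalgebra, and I ⊆ A an ideal. Let V ∈ D satisfy V(A) ⊆ I (i.e., V ∈ D_I), and let α : Der(A) → A be of the form α(X) = Σᵢ aᵢ·X(bᵢ) for finite families aᵢ, bᵢ ∈ A, with α(Z) = 0 for every Z ∈ D. Then for every X ∈ Der(A), the Lie derivative evaluates in I: V(α(X)) − X(α(V)) − α(⁅V, X⁆) ∈ I. (Hence the Bott connection on the quotient module Γ(D,I) is well defined.) -/
/-!
Write `dα(V, X) = V (α X) - X (α V) - α ⁅V, X⁆`. For `α = a db` the terms in which two derivations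
act on `b` cancel, leaving `dα(V, X) = V a * X b - X a * V b`. Each product has a factor in the
image of `V`, so `dα(V, X)` lies in any ideal containing that image.
-/

section OneForm

variable {R A ι : Type*} [CommRing R] [CommRing A] [Algebra R A]

/-- The exterior derivative `dα(V, X)` of a 1-form `α` on the derivations of `A`, or equivalently
the value at `X` of `i_V (dα)`, by the Chevalley–Eilenberg formula. Here `α` is a bare function, so
that 1-forms given by a formula need not be bundled as linear maps. -/
def oneFormExtDeriv (α : Derivation R A A → A) (V X : Derivation R A A) : A :=
  V (α X) - X (α V) - α ⁅V, X⁆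

theorem oneFormExtDeriv_sum (s : Finset ι) (α : ι → Derivation R A A → A)
    (V X : Derivation R A A) :
    oneFormExtDeriv (fun Y => ∑ i ∈ s, α i Y) V X = ∑ i ∈ s, oneFormExtDeriv (α i) V X := by
  simp only [oneFormExtDeriv, map_sum, Finset.sum_sub_distrib]

theorem oneFormExtDeriv_mul_apply (a b : A) (V X : Derivation R A A) :
    oneFormExtDeriv (fun Y => a * Y b) V X = V a * X b - X a * V b := by
  simp only [oneFormExtDeriv, Derivation.leibniz, Derivation.commutator_apply, smul_eq_mul]
  ring

theorem oneFormExtDeriv_mul_apply_mem {I : Ideal A} {V : Derivation R A A} {a b : A}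
    (hVa : V a ∈ I) (hVb : V b ∈ I) (X : Derivation R A A) :
    oneFormExtDeriv (fun Y => a * Y b) V X ∈ I := by
  rw [oneFormExtDeriv_mul_apply]
  exact I.sub_mem (I.mul_mem_right _ hVa) (I.mul_mem_left _ hVb)

theorem stmt10_general {I : Ideal A} {V : Derivation R A A} {α : Derivation R A A → A}
    {s : Finset ι} {a b : ι → A} (hα : ∀ X, α X = ∑ i ∈ s, a i * X (b i))
    (hVa : ∀ i ∈ s, V (a i) ∈ I) (hVb : ∀ i ∈ s, V (b i) ∈ I) (X : Derivation R A A) :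
    oneFormExtDeriv α V X ∈ I := by
  rw [funext hα, oneFormExtDeriv_sum]
  exact I.sum_mem fun i hi => oneFormExtDeriv_mul_apply_mem (hVa i hi) (hVb i hi) X

end OneForm

/-- let `D ⊆ Der(A)` be a Lie subalgebra, `I ⊆ A` an ideal, `V ∈ D`
with `V(A) ⊆ I`, and let `α : Der(A) → A` be of the form `α(X) = Σᵢ aᵢ·X(bᵢ)`
with `α` vanishing on `D`.  Then for every `X ∈ Der(A)`,
`V(α X) − X(α V) − α ⁅V,X⁆ ∈ I`. -/
theorem stmt10 {A : Type*} [CommRing A] [Algebra ℝ A]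
    (D : Set (Derivation ℝ A A))
    (hD : ∀ X ∈ D, ∀ Y ∈ D, ⁅X, Y⁆ ∈ D)
    (I : Ideal A)
    (V : Derivation ℝ A A) (hVD : V ∈ D) (hVI : ∀ a : A, V a ∈ I)
    (α : Derivation ℝ A A → A)
    (n : ℕ) (a b : Fin n → A)
    (hα : ∀ X : Derivation ℝ A A, α X = ∑ i, a i * X (b i))
    (hα0 : ∀ Z ∈ D, α Z = 0) :
    ∀ X : Derivation ℝ A A, V (α X) - X (α V) - α ⁅V, X⁆ ∈ I :=
  stmt10_general hα (fun i _ => hVI (a i)) (fun i _ => hVI (b i))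
end

section
/- Let A be a commutative ℝ-algebra, I ⊆ A an ideal with quotient map π : A → A/I, J an ideal of A/I with quotient map ρ : A/I → (A/I)/J, and K = π⁻¹(J), an ideal of A with quotient map σ : A → A/K. Assume: (i) for every derivation D of A/I there exists a derivation X of A with X(I) ⊆ I and π(X(a)) = D(π(a)) for all a ∈ A; and (ii) for every derivation E of (A/I)/J there exists a derivation D of A/I with D(J) ⊆ J and ρ(D(b)) = E(ρ(b)) for all b ∈ A/I. Then for every derivation F of A/K there exists a derivation X of A with X(K) ⊆ K and σ(X(a)) = F(σ(a)) for all a ∈ A. (Thus if A/I is a submanifold algebra of A, the projection q : A → A/I is a submanifold mapping.) -/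
/-!
If every derivation of the target lifts through `f : A → B` and through `g : B → C`, then it lifts
through `g ∘ f`: lift twice. Lifting also holds through any isomorphism, by conjugation, and for
`K = π⁻¹(J)` the quotient map `A → A/K` is `A → A/I → (A/I)/J` followed by the inverse of the
isomorphism `A/K ≃ (A/I)/J`. A lift of a derivation of `A/K` automatically preserves `K`, since it
maps the kernel of the quotient map into itself.
-/

section LiftsDerivations

variable {R A B C : Type*} [CommSemiring R]

section CommSemiring

variable [CommSemiring A] [Algebra R A] [CommSemiring B] [Algebra R B] [CommSemiring C]
  [Algebra R C] {f : A →ₐ[R] B} {g : B →ₐ[R] C}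

/-- An algebra homomorphism `f : A → B` lifts derivations if every derivation of `B` is `f`-related
to a derivation of `A`. This is the lifting property of submanifold algebras, for homomorphisms that
need not be quotient maps, so that it can be composed. -/
def LiftsDerivations (f : A →ₐ[R] B) : Prop :=
  ∀ D : Derivation R B B, ∃ X : Derivation R A A, ∀ a, f (X a) = D (f a)

theorem LiftsDerivations.comp (hg : LiftsDerivations g) (hf : LiftsDerivations f) :
    LiftsDerivations (g.comp f) := by
  intro E
  obtain ⟨D, hD⟩ := hg E
  obtain ⟨X, hX⟩ := hf D
  refine ⟨X, fun a ↦ ?_⟩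
  calc
    g (f (X a)) = g (D (f a)) := congrArg g (hX a)
    _ = E (g (f a)) := hD (f a)

theorem derivation_mem_ker_of_related {X : Derivation R A A} {D : Derivation R B B}
    (h : ∀ a, f (X a) = D (f a)) {a : A} (ha : a ∈ RingHom.ker f) : X a ∈ RingHom.ker f := by
  rw [RingHom.mem_ker] at ha ⊢
  rw [h, ha, map_zero]

end CommSemiring

section CommRing

variable [CommRing A] [Algebra R A] [CommRing B] [Algebra R B]

theorem liftsDerivations_algEquiv (e : A ≃ₐ[R] B) : LiftsDerivations (e : A →ₐ[R] B) := by
  intro D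
  have ker_stable (b : B) (hb : e.symm b = 0) : e.symm (D b) = 0 := by
    rw [(map_eq_zero_iff e.symm e.symm.injective).mp hb, map_zero, map_zero]
  refine ⟨Derivation.liftOfSurjective e.symm.surjective ker_stable, fun a ↦ ?_⟩
  obtain ⟨b, rfl⟩ := e.symm.surjective a
  rw [Derivation.liftOfSurjective_apply]
  simp

/-- The isomorphism `A / f⁻¹(J) ≃ B / J` induced by a surjective algebra homomorphism `f : A → B`.
For `f` the quotient map `A → A / I` it is the double-quotient isomorphism. -/
noncomputable def quotientComapAlgEquiv (f : A →ₐ[R] B) (hf : Function.Surjective f)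
    (J : Ideal B) : (A ⧸ J.comap f) ≃ₐ[R] B ⧸ J :=
  AlgEquiv.ofBijective (Ideal.quotientMapₐ J f le_rfl)
    ⟨Ideal.quotientMap_injective, Ideal.quotientMap_surjective (H := le_rfl) hf⟩

theorem quotientComapAlgEquiv_symm_comp_mkₐ (f : A →ₐ[R] B) (hf : Function.Surjective f)
    (J : Ideal B) :
    ((quotientComapAlgEquiv f hf J).symm : (B ⧸ J) →ₐ[R] A ⧸ J.comap f).comp
      ((Ideal.Quotient.mkₐ R J).comp f) = Ideal.Quotient.mkₐ R (J.comap f) :=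
  AlgHom.ext fun a ↦
    (quotientComapAlgEquiv f hf J).symm_apply_apply (Ideal.Quotient.mk (J.comap f) a)

theorem LiftsDerivations.mkₐ_comap {f : A →ₐ[R] B} (hf : LiftsDerivations f)
    (hf_surj : Function.Surjective f) {J : Ideal B}
    (hJ : LiftsDerivations (Ideal.Quotient.mkₐ R J)) :
    LiftsDerivations (Ideal.Quotient.mkₐ R (J.comap f)) := by
  rw [← quotientComapAlgEquiv_symm_comp_mkₐ f hf_surj J]
  exact (liftsDerivations_algEquiv _).comp (hJ.comp hf)

variable (R) in
/-- The quotient `A / I` is a submanifold algebra: every derivation of `A / I` lifts through the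
quotient map to a derivation of `A` preserving `I`. The property is encoded on the ideal, and the
base ring `R` is arbitrary. -/
def IsSubmanifoldQuotient (I : Ideal A) : Prop :=
  ∀ D : Derivation R (A ⧸ I) (A ⧸ I), ∃ X : Derivation R A A,
    (∀ a ∈ I, X a ∈ I) ∧ ∀ a, Ideal.Quotient.mk I (X a) = D (Ideal.Quotient.mk I a)

theorem isSubmanifoldQuotient_iff_liftsDerivations {I : Ideal A} :
    IsSubmanifoldQuotient R I ↔ LiftsDerivations (Ideal.Quotient.mkₐ R I) := by
  refine forall_congr' fun D ↦ exists_congr fun X ↦ and_iff_right_of_imp fun hX a ha ↦ ?_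
  rw [← Ideal.Quotient.mkₐ_ker R I] at ha ⊢
  exact derivation_mem_ker_of_related hX ha

theorem stmt16_general {I : Ideal A} {J : Ideal (A ⧸ I)} (hI : IsSubmanifoldQuotient R I)
    (hJ : IsSubmanifoldQuotient R J) :
    IsSubmanifoldQuotient R (J.comap (Ideal.Quotient.mk I)) := by
  rw [isSubmanifoldQuotient_iff_liftsDerivations] at hI hJ ⊢
  exact hI.mkₐ_comap (Ideal.Quotient.mkₐ_surjective R I) hJ

end CommRing

end LiftsDerivations

/-- let `I` be an ideal of `A`, `J` an ideal of `A/I`, and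
`K = π⁻¹(J)`.  If (i) every derivation of `A/I` lifts to a derivation of `A`
preserving `I`, and (ii) every derivation of `(A/I)/J` lifts to a derivation of
`A/I` preserving `J`, then every derivation of `A/K` lifts to a derivation of `A`
preserving `K`.  (If `A/I` is a submanifold algebra, `q : A → A/I` is a
submanifold mapping.) -/
theorem stmt16 {A : Type*} [CommRing A] [Algebra ℝ A]
    (I : Ideal A) (J : Ideal (A ⧸ I))
    (hi : ∀ D : Derivation ℝ (A ⧸ I) (A ⧸ I), ∃ X : Derivation ℝ A A,
      (∀ a ∈ I, X a ∈ I) ∧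
      ∀ a : A, Ideal.Quotient.mk I (X a) = D (Ideal.Quotient.mk I a))
    (hii : ∀ E : Derivation ℝ ((A ⧸ I) ⧸ J) ((A ⧸ I) ⧸ J),
      ∃ D : Derivation ℝ (A ⧸ I) (A ⧸ I),
      (∀ b ∈ J, D b ∈ J) ∧
      ∀ b : A ⧸ I, Ideal.Quotient.mk J (D b) = E (Ideal.Quotient.mk J b)) :
    ∀ F : Derivation ℝ (A ⧸ J.comap (Ideal.Quotient.mk I))
        (A ⧸ J.comap (Ideal.Quotient.mk I)),
      ∃ X : Derivation ℝ A A,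
        (∀ a ∈ J.comap (Ideal.Quotient.mk I), X a ∈ J.comap (Ideal.Quotient.mk I)) ∧
        ∀ a : A, Ideal.Quotient.mk (J.comap (Ideal.Quotient.mk I)) (X a)
          = F (Ideal.Quotient.mk (J.comap (Ideal.Quotient.mk I)) a) :=
  stmt16_general hi hii
end
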